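/- Let (G,I,O) be an open graph that admits a focused gFlow, and let u be a vertex with u ∉ I ∪ O. Then the open graph (G', I, O), where G' := (G⋆u) ∖ {u} is obtained from the local complementation of G at u by deleting the vertex u, also admits a focused gFlow. -/

import Mathlib

open Finset symmDiff

variable {V : Type*}

/-- The neighbourhood of a vertex as a `Finset`. -/
def nbhd [Fintype V] [DecidableEq V] (G : SimpleGraph V) [DecidableRel G.Adj] (v : V) :
    Finset V :=
  Finset.univ.filter (G.Adj v)

/-- The odd neighbourhood of a set of vertices: all vertices with an odd number of
neighbours in `A`. -/
def oddNbhd [Fintype V] [DecidableEq V] (G : SimpleGraph V) [DecidableRel G.Adj]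
    (A : Finset V) : Finset V :=
  Finset.univ.filter fun w => Odd (A.filter (G.Adj w)).card

/-- Local complementation of `G` at the vertex `u`. -/
def localComp (G : SimpleGraph V) (u : V) : SimpleGraph V where
  Adj v w := v ≠ w ∧ Xor' (G.Adj v w) (G.Adj u v ∧ G.Adj u w)
  symm := by
    refine ⟨?_⟩
    rintro v w ⟨h1, h2⟩
    exact ⟨h1.symm, by rwa [G.adj_comm v w, and_comm] at h2⟩
  loopless := by refine ⟨?_⟩; rintro v ⟨h, -⟩; exact h rfl

instance {a b : Prop} [Decidable a] [Decidable b] : Decidable (Xor' a b) :=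
  inferInstanceAs (Decidable ((a ∧ ¬b) ∨ (b ∧ ¬a)))

instance [DecidableEq V] (G : SimpleGraph V) [DecidableRel G.Adj] (u : V) :
    DecidableRel (localComp G u).Adj :=
  fun v w => inferInstanceAs (Decidable (v ≠ w ∧ Xor' (G.Adj v w) (G.Adj u v ∧ G.Adj u w)))

/-- The pivot of `G` along the edge `uv`. -/
def pivot (G : SimpleGraph V) (u v : V) : SimpleGraph V :=
  localComp (localComp (localComp G u) v) u

instance {α β : Type*} (G : SimpleGraph β) [DecidableRel G.Adj] (f : α → β) :
    DecidableRel (G.comap f).Adj :=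
  fun a b => inferInstanceAs (Decidable (G.Adj (f a) (f b)))

/-- `(g, r)` is a focused gFlow on the open graph `(G, I, O)`: `r` is a strict partial
order, each correction set `g u` (for `u ∉ O`) avoids the inputs, its odd neighbourhood
meets the non-outputs exactly in `{u}`, and `g u` lies strictly in the future of `u`. -/
def IsFocusedGFlow [Fintype V] [DecidableEq V] (G : SimpleGraph V) [DecidableRel G.Adj]
    (I O : Finset V) (g : V → Finset V) (r : V → V → Prop) : Prop :=
  (∀ a, ¬ r a a) ∧ (∀ a b c, r a b → r b c → r a c) ∧
    ∀ u ∉ O, g u ∩ I = ∅ ∧ oddNbhd G (g u) \ O = {u} ∧ ∀ v ∈ g u, r u v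

/-- The open graph `(G, I, O)` admits a focused gFlow. -/
def HasFocusedGFlow [Fintype V] [DecidableEq V] (G : SimpleGraph V) [DecidableRel G.Adj]
    (I O : Finset V) : Prop :=
  ∃ g r, IsFocusedGFlow G I O g r

/-! Local complementation at `u` changes the odd neighbourhood of a set `A` by `N(u) ∩ A`, and
also by `N(u)` when `u ∈ Odd(A)`. If `u ∈ g(w)`, then replacing `g(w)` by `A = g(w) ∆ g(u) ∆ {u}`
removes `u` from it; away from `u` and `O` this adds `N(u)` to its odd neighbourhood in `G`, which
cancels the `N(u)` coming from local complementation because now `u ∈ Odd(A)`. Only the error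
`N(u) ∩ A` is left. It lies in the future of `w`, so Gaussian elimination along the order
removes it. -/

theorem localComp_adj {G : SimpleGraph V} {u v w : V} :
    (localComp G u).Adj v w ↔ v ≠ w ∧ Xor (G.Adj v w) (G.Adj u v ∧ G.Adj u w) :=
  Iff.rfl

theorem odd_card_symmDiff [DecidableEq V] (s t : Finset V) :
    Odd #(s ∆ t) ↔ Xor (Odd #s) (Odd #t) := by
  have card_symmDiff : #(s ∆ t) = #(s \ t) + #(t \ s) :=
    card_union_of_disjoint disjoint_sdiff_sdiff
  have card_left := card_sdiff_add_card_inter s t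
  have card_right := card_sdiff_add_card_inter t s
  rw [inter_comm] at card_right
  grind

theorem symmDiff_erase_of_mem [DecidableEq V] {s : Finset V} {a : V} (ha : a ∈ s) :
    s ∆ s.erase a = {a} := by
  grind [mem_symmDiff]

theorem subtype_ne_insert [DecidableEq V] (s : Finset V) (u : V) :
    (insert u s).subtype (· ≠ u) = s.subtype (· ≠ u) := by
  ext ⟨v, hv⟩
  simp [hv]

section OddNbhd

variable [Fintype V] [DecidableEq V] (G : SimpleGraph V) [DecidableRel G.Adj]

theorem mem_nbhd {v w : V} : w ∈ nbhd G v ↔ G.Adj v w := by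
  simp [nbhd]

theorem mem_oddNbhd {A : Finset V} {v : V} : v ∈ oddNbhd G A ↔ Odd #(nbhd G v ∩ A) := by
  simp [oddNbhd, nbhd, filter_inter]

theorem oddNbhd_empty : oddNbhd G ∅ = ∅ := by
  ext v
  simp [mem_oddNbhd]

theorem oddNbhd_singleton (u : V) : oddNbhd G {u} = nbhd G u := by
  ext v
  by_cases h : G.Adj v u <;> simp [mem_oddNbhd, mem_nbhd, G.adj_comm u, h]

theorem oddNbhd_symmDiff (A B : Finset V) :
    oddNbhd G (A ∆ B) = oddNbhd G A ∆ oddNbhd G B := by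
  ext v
  rw [mem_oddNbhd, ← inf_eq_inter, inf_symmDiff_distrib_left, odd_card_symmDiff, mem_symmDiff,
    mem_oddNbhd, mem_oddNbhd]
  rfl

theorem oddNbhd_symmDiff_sdiff (A B O : Finset V) :
    oddNbhd G (A ∆ B) \ O = (oddNbhd G A \ O) ∆ (oddNbhd G B \ O) := by
  simp only [oddNbhd_symmDiff, sdiff_eq, inf_symmDiff_distrib_right]

theorem mem_oddNbhd_comap {W : Type*} [Fintype W] [DecidableEq W] (f : W ↪ V) {A : Finset W}
    {w : W} : w ∈ oddNbhd (G.comap f) A ↔ f w ∈ oddNbhd G (A.map f) := by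
  simp [oddNbhd, filter_map]

theorem nbhd_localComp_of_adj {u v : V} (h : G.Adj u v) :
    nbhd (localComp G u) v = nbhd G v ∆ nbhd G u ∆ {v} := by
  ext w
  by_cases hvw : w = v
  · subst hvw
    simp [mem_nbhd, mem_symmDiff, h]
  · simp [mem_nbhd, mem_symmDiff, localComp_adj, Xor, Ne.symm hvw, hvw, h]

theorem nbhd_localComp_of_not_adj {u v : V} (h : ¬ G.Adj u v) :
    nbhd (localComp G u) v = nbhd G v := by
  ext w
  simpa [mem_nbhd, localComp_adj, h, Xor] using G.ne_of_adj

theorem mem_oddNbhd_localComp {u v : V} {A : Finset V} :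
    v ∈ oddNbhd (localComp G u) A ↔
      Xor (v ∈ oddNbhd G A) (G.Adj u v ∧ Xor (u ∈ oddNbhd G A) (v ∈ A)) := by
  by_cases h : G.Adj u v
  · have odd_inter_singleton : Odd #({v} ∩ A) ↔ v ∈ A := by
      by_cases hv : v ∈ A <;> simp [hv]
    simp only [mem_oddNbhd, nbhd_localComp_of_adj G h, ← inf_eq_inter,
      inf_symmDiff_distrib_right, odd_card_symmDiff]
    simp only [inf_eq_inter, odd_inter_singleton]
    grind
  · simp [mem_oddNbhd, nbhd_localComp_of_not_adj G h, h, Xor]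

end OddNbhd

namespace IsFocusedGFlow

variable [Fintype V] [DecidableEq V] {G : SimpleGraph V} [DecidableRel G.Adj]
  {I O : Finset V} {g : V → Finset V} {r : V → V → Prop} {u v w : V}

theorem notMem_self (h : IsFocusedGFlow G I O g r) (hu : u ∉ O) : u ∉ g u :=
  fun hmem => h.1 u ((h.2.2 u hu).2.2 u hmem)

theorem mem_oddNbhd_iff (h : IsFocusedGFlow G I O g r) (hw : w ∉ O) (hv : v ∉ O) :
    v ∈ oddNbhd G (g w) ↔ v = w := by
  have hmem : v ∈ oddNbhd G (g w) \ O ↔ v ∈ ({w} : Finset V) := by rw [(h.2.2 w hw).2.1]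
  simpa [hv] using hmem

theorem notMem_and_rel_of_mem (h : IsFocusedGFlow G I O g r) (hw : w ∉ O) (hv : v ∈ g w) :
    v ∉ I ∧ r w v :=
  ⟨disjoint_left.1 (disjoint_iff_inter_eq_empty.2 (h.2.2 w hw).1) hv, (h.2.2 w hw).2.2 v hv⟩

theorem comap_subtype {p : V → Prop} [DecidablePred p] (h : IsFocusedGFlow G I O g r)
    (hp : ∀ v, ¬ p v → v ∈ I) :
    IsFocusedGFlow (G.comap (Subtype.val : {v // p v} → V)) (I.subtype p) (O.subtype p)
      (fun w => (g w).subtype p) (fun a b => r a b) := by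
  refine ⟨fun a => h.1 a, fun a b c => h.2.1 a b c, fun w hwO => ?_⟩
  have hw : w.1 ∉ O := by simpa using hwO
  have hgp : ∀ v ∈ g w, p v := fun v hv =>
    not_not.1 fun hpv => (h.notMem_and_rel_of_mem hw hv).1 (hp v hpv)
  refine ⟨?_, ?_, fun v hv => (h.notMem_and_rel_of_mem hw (mem_subtype.1 hv)).2⟩
  · ext v
    simpa using fun hv => (h.notMem_and_rel_of_mem hw hv).1
  · ext v
    have mem_oddNbhd_subtype : v ∈ oddNbhd (G.comap Subtype.val) ((g w).subtype p) ↔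
        v.1 ∈ oddNbhd G (g w) := by
      have := mem_oddNbhd_comap G (Function.Embedding.subtype p) (A := (g w).subtype p) (w := v)
      rwa [subtype_map_of_mem hgp] at this
    rw [mem_sdiff, mem_oddNbhd_subtype, mem_subtype, ← mem_sdiff, (h.2.2 w hw).2.1]
    simp [Subtype.ext_iff]

end IsFocusedGFlow

/-- `(g, r)` is a (not necessarily focused) gFlow on the open graph `(G, I, O)`: the odd
neighbourhood of `g w` contains `w`, and its other non-output vertices need only lie in the future
of `w`. As for focused gFlows, output vertices of the odd neighbourhood are unconstrained. -/
def IsGFlow [Fintype V] [DecidableEq V] (G : SimpleGraph V) [DecidableRel G.Adj]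
    (I O : Finset V) (g : V → Finset V) (r : V → V → Prop) : Prop :=
  (∀ a, ¬ r a a) ∧ (∀ a b c, r a b → r b c → r a c) ∧
    ∀ w ∉ O, (∀ v ∈ g w, v ∉ I ∧ r w v) ∧ w ∈ oddNbhd G (g w) ∧
      ∀ v ∈ oddNbhd G (g w), v ∉ O → v ≠ w → r w v

section Focusing

variable [Fintype V] [DecidableEq V] {G : SimpleGraph V} [DecidableRel G.Adj]
  {I O : Finset V} {g : V → Finset V} {r : V → V → Prop}

theorem exists_oddNbhd_sdiff_eq {T : Finset V} {p : V → Prop}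
    (h : ∀ v ∈ T, ∃ A : Finset V, (∀ x ∈ A, p x) ∧ oddNbhd G A \ O = {v}) :
    ∃ A : Finset V, (∀ x ∈ A, p x) ∧ oddNbhd G A \ O = T := by
  induction T using Finset.induction_on with
  | empty => exact ⟨∅, by simp, by simp [oddNbhd_empty]⟩
  | insert v T hv ih =>
    obtain ⟨A, hAp, hA⟩ := h v (mem_insert_self v T)
    obtain ⟨B, hBp, hB⟩ := ih fun x hx => h x (mem_insert_of_mem hx)
    refine ⟨A ∆ B, fun x hx => ?_, ?_⟩
    · exact (mem_union.1 (symmDiff_subset_union hx)).elim (hAp x) (hBp x)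
    · rw [oddNbhd_symmDiff_sdiff, hA, hB, (disjoint_singleton_left.2 hv).symmDiff_eq_sup,
        insert_eq]
      rfl

theorem IsGFlow.exists_oddNbhd_sdiff_eq_singleton (h : IsGFlow G I O g r) (w : V) (hw : w ∉ O) :
    ∃ A : Finset V, (∀ v ∈ A, v ∉ I ∧ r w v) ∧ oddNbhd G A \ O = {w} := by
  obtain ⟨irrefl, trans, hg⟩ := h
  have : Std.Irrefl (flip r) := ⟨irrefl⟩
  have : IsTrans V (flip r) := ⟨fun a b c hab hbc => trans c b a hbc hab⟩
  induction w using (Finite.wellFounded_of_trans_of_irrefl (flip r)).induction with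
  | _ w ih =>
  obtain ⟨hgw, hmem, hfuture⟩ := hg w hw
  have exists_error : ∃ B : Finset V, (∀ v ∈ B, v ∉ I ∧ r w v) ∧
      oddNbhd G B \ O = (oddNbhd G (g w) \ O).erase w := by
    refine exists_oddNbhd_sdiff_eq fun v hv => ?_
    obtain ⟨hvw, hv, hvO⟩ : v ≠ w ∧ v ∈ oddNbhd G (g w) ∧ v ∉ O := by simpa using hv
    have hwv : r w v := hfuture v hv hvO hvw
    obtain ⟨B, hB, hBv⟩ := ih v hwv hvO
    exact ⟨B, fun x hx => ⟨(hB x hx).1, trans w v x hwv (hB x hx).2⟩, hBv⟩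
  obtain ⟨B, hB, hBw⟩ := exists_error
  refine ⟨g w ∆ B, fun v hv => ?_, ?_⟩
  · exact (mem_union.1 (symmDiff_subset_union hv)).elim (hgw v) (hB v)
  · rw [oddNbhd_symmDiff_sdiff, hBw, symmDiff_erase_of_mem (mem_sdiff.2 ⟨hmem, hw⟩)]

theorem IsGFlow.hasFocusedGFlow (h : IsGFlow G I O g r) : HasFocusedGFlow G I O := by
  choose! f hf hodd using h.exists_oddNbhd_sdiff_eq_singleton
  refine ⟨f, r, h.1, h.2.1, fun w hw => ⟨?_, hodd w hw, fun v hv => (hf w hw v hv).2⟩⟩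
  exact disjoint_iff_inter_eq_empty.1 (disjoint_left.2 fun v hv => (hf w hw v hv).1)

end Focusing

section LocalComplementation

variable [DecidableEq V] {g : V → Finset V} {u w v : V}

/-- The correction sets of the local complement at `u`, rid of `u` so that it can be deleted. When
`u ∉ g u`, adding `{u}` is what removes `u` from `g w`, and it also adds `N(u)` to the odd
neighbourhood. -/
def eliminate (g : V → Finset V) (u w : V) : Finset V :=
  if u ∈ g w then g w ∆ (g u ∆ {u}) else g w

theorem notMem_eliminate (hu : u ∉ g u) : u ∉ eliminate g u w := by
  grind [eliminate, mem_symmDiff]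

namespace IsFocusedGFlow

variable [Fintype V] {G : SimpleGraph V} [DecidableRel G.Adj] {I O : Finset V}
  {r : V → V → Prop}

theorem notMem_and_rel_of_mem_eliminate (h : IsFocusedGFlow G I O g r) (hu : u ∉ O)
    (hw : w ∉ O) (hv : v ∈ eliminate g u w) : v ∉ I ∧ r w v := by
  by_cases hvw : v ∈ g w
  · exact h.notMem_and_rel_of_mem hw hvw
  · have huv : u ∈ g w ∧ v ∈ g u := by grind [eliminate, mem_symmDiff]
    have hvu := h.notMem_and_rel_of_mem hu huv.2
    exact ⟨hvu.1, h.2.1 w u v (h.notMem_and_rel_of_mem hw huv.1).2 hvu.2⟩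

theorem mem_oddNbhd_eliminate (h : IsFocusedGFlow G I O g r) (hu : u ∉ O) (hw : w ∉ O)
    (hv : v ∉ O) :
    v ∈ oddNbhd G (eliminate g u w) ↔ Xor (v = w) (u ∈ g w ∧ Xor (v = u) (G.Adj u v)) := by
  by_cases huw : u ∈ g w
  · simp only [eliminate, huw, if_true, oddNbhd_symmDiff, oddNbhd_singleton, mem_symmDiff,
      mem_nbhd, h.mem_oddNbhd_iff hw hv, h.mem_oddNbhd_iff hu hv]
    grind
  · simp [eliminate, huw, h.mem_oddNbhd_iff hw hv, Xor]

theorem mem_oddNbhd_localComp_eliminate (h : IsFocusedGFlow G I O g r) (hu : u ∉ O)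
    (hw : w ∉ O) (hv : v ∉ O) (hwu : w ≠ u) (hvu : v ≠ u) :
    v ∈ oddNbhd (localComp G u) (eliminate g u w) ↔
      Xor (v = w) (G.Adj u v ∧ v ∈ eliminate g u w) := by
  have mem_oddNbhd_self : u ∈ oddNbhd G (eliminate g u w) ↔ u ∈ g w := by
    simp [h.mem_oddNbhd_eliminate hu hw hu, hwu.symm, Xor]
  rw [mem_oddNbhd_localComp, mem_oddNbhd_self, h.mem_oddNbhd_eliminate hu hw hv]
  grind

-- Declaring `u` both an input and an output discards it from correction sets and from parity
-- constraints, so that `u` can subsequently be deleted.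
theorem isGFlow_localComp (h : IsFocusedGFlow G I O g r) (hu : u ∉ O) :
    IsGFlow (localComp G u) (insert u I) (insert u O) (eliminate g u) r := by
  refine ⟨h.1, h.2.1, fun w hwuO => ?_⟩
  obtain ⟨hwu, hw⟩ : w ≠ u ∧ w ∉ O := by simpa using hwuO
  have hfuture {v : V} (hv : v ∈ eliminate g u w) : v ∉ I ∧ r w v :=
    h.notMem_and_rel_of_mem_eliminate hu hw hv
  refine ⟨fun v hv => ⟨?_, (hfuture hv).2⟩, ?_, fun v hv hvuO hvw => ?_⟩
  · have hvu : v ≠ u := ne_of_mem_of_not_mem hv (notMem_eliminate (h.notMem_self hu))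
    simpa [hvu] using (hfuture hv).1
  · have hww : w ∉ eliminate g u w := fun hmem => h.1 w (hfuture hmem).2
    simp [h.mem_oddNbhd_localComp_eliminate hu hw hw hwu hwu, hww, Xor]
  · obtain ⟨hvu, hvO⟩ : v ≠ u ∧ v ∉ O := by simpa using hvuO
    have hmem := (h.mem_oddNbhd_localComp_eliminate hu hw hvO hwu hvu).1 hv
    exact (hfuture (hmem.resolve_left fun hl => hvw hl.1).1.2).2

end IsFocusedGFlow

end LocalComplementation

theorem hasFocusedGFlow_localComp_delete_general [Fintype V] [DecidableEq V]
    (G : SimpleGraph V) [DecidableRel G.Adj] (I O : Finset V)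
    (h : HasFocusedGFlow G I O) (u : V) (hu : u ∉ O) :
    HasFocusedGFlow ((localComp G u).comap (Subtype.val : {x : V // x ≠ u} → V))
      (I.subtype (· ≠ u)) (O.subtype (· ≠ u)) := by
  obtain ⟨g, r, hgr⟩ := h
  obtain ⟨g', r', hgr'⟩ := (hgr.isGFlow_localComp hu).hasFocusedGFlow
  have hdelete := hgr'.comap_subtype (p := (· ≠ u)) (by simp)
  rw [subtype_ne_insert, subtype_ne_insert] at hdelete
  exact ⟨_, _, hdelete⟩

theorem hasFocusedGFlow_localComp_delete [Fintype V] [DecidableEq V]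
    (G : SimpleGraph V) [DecidableRel G.Adj] (I O : Finset V)
    (h : HasFocusedGFlow G I O) (u : V) (hu : u ∉ I ∪ O) :
    HasFocusedGFlow ((localComp G u).comap (Subtype.val : {x : V // x ≠ u} → V))
      (I.subtype (· ≠ u)) (O.subtype (· ≠ u)) :=
  hasFocusedGFlow_localComp_delete_general G I O h u (notMem_mono subset_union_right hu)
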